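/- Assume 2 is a non-zero-divisor in k. Then {c ∈ R : a·c = c·s(a) for all a ∈ ker ∂} = {(x₁ − x₂)·h : h ∈ C}, where C is the k-subalgebra generated by x₁² and x₂². Consequently, every additive map ξ : R → R that is right R-linear (ξ(m·r) = ξ(m)·r) and satisfies ξ(s(a)·m) = a·ξ(m) for all a ∈ ker ∂ (i.e. every homomorphism of (R^s, R)-bimodules from the twisted bimodule R̲ to R) is of the form ξ(m) = h·(x₁ − x₂)·m for a unique h ∈ C. -/

import Mathlib

/-- The anticommutation relation `x₁x₂ + x₂x₁ = 0` on the free `k`-algebra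
on two generators. -/
inductive OddRel (k : Type*) [CommRing k] :
    FreeAlgebra k (Fin 2) → FreeAlgebra k (Fin 2) → Prop
  | anticomm : OddRel k
      (FreeAlgebra.ι k (0 : Fin 2) * FreeAlgebra.ι k (1 : Fin 2) +
        FreeAlgebra.ι k (1 : Fin 2) * FreeAlgebra.ι k (0 : Fin 2)) 0

/-- The `k`-algebra of skew polynomials in two variables,
`R = k⟨x₁,x₂⟩/(x₁x₂ + x₂x₁)`. -/
abbrev OddPoly (k : Type*) [CommRing k] := RingQuot (OddRel k)

/-- The generators `x₁ = X k 0` and `x₂ = X k 1` of `R`. -/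
noncomputable def X (k : Type*) [CommRing k] (i : Fin 2) : OddPoly k :=
  RingQuot.mkAlgHom k (OddRel k) (FreeAlgebra.ι k i)

/-!
Since `x₁²` and `x₂²` are central, `R` is the quaternion algebra over `k[u, v]` with `i = x₁`,
`j = x₂`, `i² = u` and `j² = v`. The elements `x₁ - x₂` and `x₁x₂` of `ker ∂` are sent by `s` to
`x₁ - x₂` and `x₂x₁`, and these two conditions alone already force the coordinates of `c` in the
basis `1, i, j, ij` to be `(0, p, -p, 0)`. Conversely, `f(x₁ - x₂) - (x₁ - x₂)s(f)` equals
`(x₁² - x₂²)s(∂f)`, which vanishes on `ker ∂`. A right-linear `ξ` is left multiplication by `ξ(1)`,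
and the twisted left-linearity says that `ξ(1)` is such a `c`.
-/

open Quaternion

/-- The set of `c` with `a * c = c * σ a` for all `a ∈ S`: the elements whose left multiplications
intertwine the left action of `S` twisted by `σ` with the untwisted one. -/
def twistedCentralizer {M : Type*} [Mul M] (σ : M → M) (S : Set M) : Set M :=
  {c | ∀ a ∈ S, a * c = c * σ a}

theorem mul_mem_twistedCentralizer {M : Type*} [Semigroup M] {σ : M → M} {S : Set M} {c z : M}
    (hc : c ∈ twistedCentralizer σ S) (hz : ∀ a, Commute z a) :
    c * z ∈ twistedCentralizer σ S := fun a ha => by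
  rw [← mul_assoc, hc a ha, mul_assoc, mul_assoc, (hz (σ a)).eq]

section RightLinear

variable {M : Type*} [MulOneClass M] {ξ : M → M}

theorem eq_map_one_mul_of_map_mul (hright : ∀ m r, ξ (m * r) = ξ m * r) (m : M) :
    ξ m = ξ 1 * m := by
  rw [← hright, one_mul]

theorem map_one_mem_twistedCentralizer {σ : M → M} {S : Set M}
    (hright : ∀ m r, ξ (m * r) = ξ m * r) (hleft : ∀ a ∈ S, ∀ m, ξ (σ a * m) = a * ξ m) :
    ξ 1 ∈ twistedCentralizer σ S := fun a ha => by
  rw [← hleft a ha, mul_one, eq_map_one_mul_of_map_mul hright]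

end RightLinear

section TwistedCommutator

variable {R : Type*} [Ring R]

/-- The commutator of `a` and `c` twisted by `σ`, which vanishes for all `a ∈ S` exactly when `c`
lies in `twistedCentralizer σ S`. -/
def twistedCommutator (σ : R → R) (c a : R) : R :=
  a * c - c * σ a

theorem mem_twistedCentralizer_iff_twistedCommutator_eq_zero {σ : R → R} {S : Set R} {c : R} :
    c ∈ twistedCentralizer σ S ↔ ∀ a ∈ S, twistedCommutator σ c a = 0 :=
  forall₂_congr fun _ _ => sub_eq_zero.symm

theorem twistedCommutator_add {F : Type*} [FunLike F R R] [AddHomClass F R R] (σ : F)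
    (c a b : R) :
    twistedCommutator σ c (a + b) = twistedCommutator σ c a + twistedCommutator σ c b := by
  simp only [twistedCommutator, map_add]
  noncomm_ring

theorem twistedCommutator_mul {F : Type*} [FunLike F R R] [MulHomClass F R R] (σ : F)
    (c a b : R) :
    twistedCommutator σ c (a * b) =
      a * twistedCommutator σ c b + twistedCommutator σ c a * σ b := by
  simp only [twistedCommutator, map_mul]
  noncomm_ring

theorem twistedCommutator_sub_left {σ : R → R} {a b : R} (h : σ a = -b) :
    twistedCommutator σ (a - b) a = a ^ 2 - b ^ 2 := by
  rw [twistedCommutator, h]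
  noncomm_ring

theorem twistedCommutator_sub_right {σ : R → R} {a b : R} (h : σ b = -a) :
    twistedCommutator σ (a - b) b = a ^ 2 - b ^ 2 := by
  rw [twistedCommutator, h]
  noncomm_ring

end TwistedCommutator

theorem commute_sq_of_mul_eq_neg_mul {M : Type*} [Monoid M] [HasDistribNeg M] {a b : M}
    (h : b * a = -(a * b)) : Commute (a ^ 2) b := by
  have hsemi : SemiconjBy b a (-a) := by rw [SemiconjBy, neg_mul, h]
  have hsq := hsemi.pow_right 2
  rw [neg_sq] at hsq
  exact Commute.symm hsq

section Quaternion

open QuaternionAlgebra (Basis)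

variable {A : Type*} [CommRing A] {u v : A}

theorem quaternion_eq_i_sub_j_mul_imI (h2 : IsRegular (2 : A)) (hu : IsRegular u) {q : ℍ[A,u,0,v]}
    (hsub : Commute ((Basis.self A).i - (Basis.self A).j) q)
    (hmul : (Basis.self A).i * (Basis.self A).j * q =
      q * ((Basis.self A).j * (Basis.self A).i)) :
    q = ((Basis.self A).i - (Basis.self A).j) * (q.imI : ℍ[A,u,0,v]) := by
  have hre : q.re = 0 := h2.left <| show 2 * q.re = 2 * 0 by
    have h : q.re = -q.re := by simpa using congrArg QuaternionAlgebra.imK hmul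
    linear_combination h
  have himJ : q.imJ = -q.imI := h2.left <| show 2 * q.imJ = 2 * -q.imI by
    have h : q.imJ + q.imI = -q.imI - q.imJ := by
      simpa using congrArg QuaternionAlgebra.imK hsub.eq
    linear_combination h
  have himK : q.imK = 0 := hu.left <| h2.left <| show 2 * (u * q.imK) = 2 * (u * 0) by
    have h : u * q.imK = -(u * q.imK) := by
      simpa [hre] using congrArg QuaternionAlgebra.imJ hsub.eq
    linear_combination h
  ext <;> simp [hre, himJ, himK]

end Quaternion

namespace OddPoly

variable {k : Type*} [CommRing k]

theorem adjoin_range_X : Algebra.adjoin k (Set.range (X k)) = ⊤ := by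
  have hX : Set.range (X k) =
      RingQuot.mkAlgHom k (OddRel k) '' Set.range (FreeAlgebra.ι k) := by
    rw [← Set.range_comp]
    rfl
  rw [hX, ← AlgHom.map_adjoin, FreeAlgebra.adjoin_range_ι, Algebra.map_top,
    AlgHom.range_eq_top]
  exact RingQuot.mkAlgHom_surjective k (OddRel k)

theorem algHom_ext {B : Type*} [Semiring B] [Algebra k B] {φ ψ : OddPoly k →ₐ[k] B}
    (h : ∀ i, φ (X k i) = ψ (X k i)) : φ = ψ :=
  AlgHom.ext_of_adjoin_eq_top adjoin_range_X (Set.forall_mem_range.2 h)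

theorem X_one_mul_X_zero : X k 1 * X k 0 = -(X k 0 * X k 1) := by
  have h := RingQuot.mkAlgHom_rel k (OddRel.anticomm (k := k))
  simp only [map_add, map_mul, map_zero] at h
  exact eq_neg_of_add_eq_zero_right h

theorem commute_X_sq_X (i j : Fin 2) : Commute (X k i ^ 2) (X k j) := by
  fin_cases i <;> fin_cases j
  · exact Commute.pow_self _ _
  · exact commute_sq_of_mul_eq_neg_mul X_one_mul_X_zero
  · exact commute_sq_of_mul_eq_neg_mul (neg_eq_iff_eq_neg.2 X_one_mul_X_zero).symm
  · exact Commute.pow_self _ _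

theorem X_sq_mem_center (i : Fin 2) : X k i ^ 2 ∈ Subalgebra.center k (OddPoly k) := by
  have hcentralizer : Subalgebra.centralizer k ({X k i ^ 2} : Set (OddPoly k)) = ⊤ := by
    rw [eq_top_iff, ← adjoin_range_X, Algebra.adjoin_le_iff, Set.range_subset_iff]
    rintro j _ rfl
    exact commute_X_sq_X i j
  exact Set.singleton_subset_iff.1 ((Subalgebra.centralizer_eq_top_iff_subset k).1 hcentralizer)

variable (k) in
/-- The evaluation `u ↦ x₁²`, `v ↦ x₂²` of commutative polynomials at central elements of `R`. -/
noncomputable def evalSq : MvPolynomial (Fin 2) k →ₐ[k] OddPoly k :=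
  (Subalgebra.center k (OddPoly k)).val.comp
    (MvPolynomial.aeval fun i => ⟨X k i ^ 2, X_sq_mem_center i⟩)

/-- `R` as an algebra over `k[u, v]`, through `evalSq`. -/
noncomputable instance : Algebra (MvPolynomial (Fin 2) k) (OddPoly k) :=
  RingHom.toAlgebra' (evalSq k).toRingHom
    fun _ a => (Subalgebra.mem_center_iff.mp (Subtype.property _) a).symm

theorem algebraMap_X (i : Fin 2) :
    algebraMap (MvPolynomial (Fin 2) k) (OddPoly k) (MvPolynomial.X i) = X k i ^ 2 :=
  congrArg Subtype.val (MvPolynomial.aeval_X _ i)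

instance : IsScalarTower k (MvPolynomial (Fin 2) k) (OddPoly k) :=
  .of_algebraMap_eq fun r => ((evalSq k).commutes r).symm

theorem mem_adjoin_X_sq_iff {h : OddPoly k} :
    h ∈ Algebra.adjoin k ({X k 0 ^ 2, X k 1 ^ 2} : Set (OddPoly k)) ↔
      ∃ p : MvPolynomial (Fin 2) k, algebraMap _ _ p = h := by
  have himage : ({X k 0 ^ 2, X k 1 ^ 2} : Set (OddPoly k)) =
      IsScalarTower.toAlgHom k (MvPolynomial (Fin 2) k) (OddPoly k) ''
        Set.range MvPolynomial.X := by
    ext a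
    simp [Fin.exists_fin_two, eq_comm, algebraMap_X]
  rw [himage, ← AlgHom.map_adjoin, MvPolynomial.adjoin_range_X, Algebra.map_top]
  rfl

section Quaternion

open QuaternionAlgebra (Basis)

variable (k) in
/-- The quaternion algebra over `k[u, v]` with `i² = u`, `j² = v` and `ji = -ij`. -/
abbrev Quat : Type _ :=
  ℍ[MvPolynomial (Fin 2) k,MvPolynomial.X 0,0,MvPolynomial.X 1]

variable (k) in
/-- The homomorphism `x₁ ↦ i`, `x₂ ↦ j`, which identifies `R` with a quaternion algebra. -/
noncomputable def toQuat : OddPoly k →ₐ[k] Quat k :=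
  RingQuot.liftAlgHom k ⟨FreeAlgebra.lift k ![(Basis.self _).i, (Basis.self _).j], by
    rintro _ _ ⟨⟩
    ext <;> simp⟩

@[simp]
theorem toQuat_X_zero : toQuat k (X k 0) = (Basis.self _).i := by
  simp [toQuat, X]

@[simp]
theorem toQuat_X_one : toQuat k (X k 1) = (Basis.self _).j := by
  simp [toQuat, X]

@[simp]
theorem toQuat_algebraMap (p : MvPolynomial (Fin 2) k) :
    toQuat k (algebraMap _ _ p) = algebraMap _ _ p := by
  have h : (toQuat k).comp (IsScalarTower.toAlgHom k (MvPolynomial (Fin 2) k) (OddPoly k)) =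
      IsScalarTower.toAlgHom k (MvPolynomial (Fin 2) k) (Quat k) := by
    apply MvPolynomial.algHom_ext
    intro i
    fin_cases i <;> ext <;> simp [pow_two, QuaternionAlgebra.algebraMap_eq, algebraMap_X]
  exact DFunLike.congr_fun h p

variable (k) in
/-- The generators `x₁, x₂` as a quaternion basis of `R` over `k[u, v]`; it yields the inverse of
`toQuat`. -/
noncomputable def quatBasis : Basis (OddPoly k)
    (MvPolynomial.X 0 : MvPolynomial (Fin 2) k) 0 (MvPolynomial.X 1) where
  i := X k 0
  j := X k 1
  k := X k 0 * X k 1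
  i_mul_i := by simp [Algebra.smul_def, algebraMap_X, pow_two]
  j_mul_j := by simp [Algebra.smul_def, algebraMap_X, pow_two]
  i_mul_j := rfl
  j_mul_i := by simp [X_one_mul_X_zero]

theorem toQuat_injective : Function.Injective (toQuat k) := by
  have h : ((quatBasis k).liftHom.restrictScalars k).comp (toQuat k) = .id k _ :=
    algHom_ext fun i => by fin_cases i <;> simp [quatBasis, Basis.lift]
  exact Function.LeftInverse.injective (g := (quatBasis k).liftHom) (DFunLike.congr_fun h)

theorem X_sub_X_mul_algebraMap_injective : Function.Injective
    fun p : MvPolynomial (Fin 2) k => (X k 0 - X k 1) * algebraMap _ (OddPoly k) p := by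
  intro p q hpq
  simpa [QuaternionAlgebra.algebraMap_eq] using
    congrArg (fun c => (toQuat k c).imI) hpq

theorem exists_eq_X_sub_X_mul_algebraMap (h2 : IsRegular (2 : k)) {c : OddPoly k}
    (hsub : Commute (X k 0 - X k 1) c) (hmul : X k 0 * X k 1 * c = c * (X k 1 * X k 0)) :
    ∃ p : MvPolynomial (Fin 2) k, c = (X k 0 - X k 1) * algebraMap _ _ p := by
  have h2' : IsRegular (2 : MvPolynomial (Fin 2) k) := by
    simpa only [← MvPolynomial.C_apply, map_ofNat] using h2.monomial (m := 0)
  refine ⟨(toQuat k c).imI, toQuat_injective ?_⟩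
  rw [map_mul, map_sub, toQuat_X_zero, toQuat_X_one, toQuat_algebraMap]
  refine quaternion_eq_i_sub_j_mul_imI h2' MvPolynomial.isRegular_X ?_ ?_
  · simpa using hsub.map (toQuat k)
  · simpa only [map_mul, toQuat_X_zero, toQuat_X_one] using congrArg (toQuat k) hmul

end Quaternion

/-- `D` is the odd Demazure operator `∂`, relative to the sign-twisted transposition `s`. -/
structure IsOddDemazure (s : OddPoly k ≃ₐ[k] OddPoly k) (D : OddPoly k →ₗ[k] OddPoly k) :
    Prop where
  s_X_zero : s (X k 0) = -X k 1
  s_X_one : s (X k 1) = -X k 0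
  map_one : D 1 = 0
  map_X_zero : D (X k 0) = 1
  map_X_one : D (X k 1) = 1
  leibniz : ∀ f g, D (f * g) = D f * g + s f * D g

namespace IsOddDemazure

variable {s : OddPoly k ≃ₐ[k] OddPoly k} {D : OddPoly k →ₗ[k] OddPoly k}

theorem s_s (hD : IsOddDemazure s D) (f : OddPoly k) : s (s f) = f := by
  have h : (s : OddPoly k →ₐ[k] OddPoly k).comp s = .id k _ :=
    algHom_ext fun i => by fin_cases i <;> simp [hD.s_X_zero, hD.s_X_one]
  exact DFunLike.congr_fun h f

theorem s_X_sub_X (hD : IsOddDemazure s D) : s (X k 0 - X k 1) = X k 0 - X k 1 := by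
  rw [map_sub, hD.s_X_zero, hD.s_X_one]
  exact neg_sub_neg _ _

theorem s_X_mul_X (hD : IsOddDemazure s D) : s (X k 0 * X k 1) = X k 1 * X k 0 := by
  rw [map_mul, hD.s_X_zero, hD.s_X_one]
  exact neg_mul_neg (X k 1) (X k 0)

theorem X_sub_X_mem_ker (hD : IsOddDemazure s D) : X k 0 - X k 1 ∈ LinearMap.ker D := by
  simp [hD.map_X_zero, hD.map_X_one]

theorem X_mul_X_mem_ker (hD : IsOddDemazure s D) : X k 0 * X k 1 ∈ LinearMap.ker D := by
  simp [hD.leibniz, hD.map_X_zero, hD.map_X_one, hD.s_X_zero]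

/- Both sides satisfy `E (f * g) = f * E g + E f * s g`; for the right one this is the twisted
Leibniz rule conjugated by the involution `s`. -/
theorem twistedCommutator_X_sub_X (hD : IsOddDemazure s D) (f : OddPoly k) :
    twistedCommutator s (X k 0 - X k 1) f = (X k 0 ^ 2 - X k 1 ^ 2) * s (D f) := by
  have hf : f ∈ Algebra.adjoin k (Set.range (X k)) := by simp [adjoin_range_X]
  induction hf using Algebra.adjoin_induction with
  | mem f hf =>
    obtain ⟨i, rfl⟩ := hf
    fin_cases i
    · simpa [hD.map_X_zero] using twistedCommutator_sub_left hD.s_X_zero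
    · simpa [hD.map_X_one] using twistedCommutator_sub_right hD.s_X_one
  | algebraMap r =>
    simp [twistedCommutator, Algebra.algebraMap_eq_smul_one, hD.map_one]
  | add f g _ _ hf hg => rw [twistedCommutator_add, hf, hg, map_add, map_add, mul_add]
  | mul f g _ _ hf hg =>
    have hcentral : f * (X k 0 ^ 2 - X k 1 ^ 2) = (X k 0 ^ 2 - X k 1 ^ 2) * f :=
      Subalgebra.mem_center_iff.1 (sub_mem (X_sq_mem_center 0) (X_sq_mem_center 1)) f
    calc
      twistedCommutator s (X k 0 - X k 1) (f * g)
      _ = f * ((X k 0 ^ 2 - X k 1 ^ 2) * s (D g)) + (X k 0 ^ 2 - X k 1 ^ 2) * s (D f) * s g := by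
        rw [twistedCommutator_mul, hf, hg]
      _ = (X k 0 ^ 2 - X k 1 ^ 2) * (s (D f) * s g + f * s (D g)) := by
        rw [← mul_assoc f, hcentral, mul_assoc, mul_assoc, ← mul_add, add_comm]
      _ = (X k 0 ^ 2 - X k 1 ^ 2) * s (D (f * g)) := by
        rw [hD.leibniz, map_add, map_mul, map_mul, hD.s_s]

theorem X_sub_X_mem_twistedCentralizer_ker (hD : IsOddDemazure s D) :
    X k 0 - X k 1 ∈ twistedCentralizer s (LinearMap.ker D) :=
  mem_twistedCentralizer_iff_twistedCommutator_eq_zero.2 fun a ha => by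
    rw [hD.twistedCommutator_X_sub_X, LinearMap.mem_ker.1 ha, map_zero, mul_zero]

theorem mem_twistedCentralizer_ker_iff (hD : IsOddDemazure s D) (h2 : IsRegular (2 : k))
    {c : OddPoly k} :
    c ∈ twistedCentralizer s (LinearMap.ker D) ↔
      ∃ p : MvPolynomial (Fin 2) k, c = (X k 0 - X k 1) * algebraMap _ _ p := by
  refine ⟨fun hc => exists_eq_X_sub_X_mul_algebraMap h2 ?_ ?_, ?_⟩
  · rw [Commute, SemiconjBy, hc _ hD.X_sub_X_mem_ker, hD.s_X_sub_X]
  · rw [hc _ hD.X_mul_X_mem_ker, hD.s_X_mul_X]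
  · rintro ⟨p, rfl⟩
    exact mul_mem_twistedCentralizer hD.X_sub_X_mem_twistedCentralizer_ker
      (Algebra.commute_algebraMap_left p)

end IsOddDemazure

end OddPoly

/-- If `2` is a non-zero-divisor in `k`, then
`{c ∈ R : a·c = c·s(a) for all a ∈ ker ∂} = {(x₁ - x₂)·h : h ∈ C}`;
consequently every additive, right `R`-linear map `ξ : R → R` with
`ξ(s(a)·m) = a·ξ(m)` for `a ∈ ker ∂` (an `(R^s, R)`-bimodule map `R̲ → R`)
is of the form `ξ(m) = h·(x₁ - x₂)·m` for a unique `h ∈ C`. -/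
theorem stmt12 (k : Type*) [CommRing k]
    (h2 : ∀ a : k, 2 * a = 0 → a = 0)
    (s : OddPoly k ≃ₐ[k] OddPoly k)
    (hs1 : s (X k 0) = - X k 1) (hs2 : s (X k 1) = - X k 0)
    (D : OddPoly k →ₗ[k] OddPoly k)
    (hD0 : D 1 = 0) (hD1 : D (X k 0) = 1) (hD2 : D (X k 1) = 1)
    (hDL : ∀ f g : OddPoly k, D (f * g) = D f * g + s f * D g)
 :
    ({c : OddPoly k | ∀ a ∈ LinearMap.ker D, a * c = c * s a} =
      {y : OddPoly k |
        ∃ h ∈ Algebra.adjoin k ({X k 0 ^ 2, X k 1 ^ 2} : Set (OddPoly k)),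
          y = (X k 0 - X k 1) * h}) ∧
    (∀ ξ : OddPoly k →+ OddPoly k,
      (∀ m r : OddPoly k, ξ (m * r) = ξ m * r) →
      (∀ a ∈ LinearMap.ker D, ∀ m : OddPoly k, ξ (s a * m) = a * ξ m) →
      ∃! h : OddPoly k,
        h ∈ Algebra.adjoin k ({X k 0 ^ 2, X k 1 ^ 2} : Set (OddPoly k)) ∧
        ∀ m : OddPoly k, ξ m = h * (X k 0 - X k 1) * m) := by
  have hD : OddPoly.IsOddDemazure s D := ⟨hs1, hs2, hD0, hD1, hD2, hDL⟩
  have htwo : IsRegular (2 : k) := isRegular_iff_mem_nonZeroDivisors.2 <|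
    mem_nonZeroDivisors_iff.2 ⟨h2, fun a ha => h2 a (by rwa [mul_comm])⟩
  simp only [OddPoly.mem_adjoin_X_sq_iff]
  refine ⟨?_, fun ξ hright hleft => ?_⟩
  · ext c
    exact (hD.mem_twistedCentralizer_ker_iff htwo).trans (by simp)
  · obtain ⟨p, hp⟩ := (hD.mem_twistedCentralizer_ker_iff htwo).1
      (map_one_mem_twistedCentralizer hright hleft)
    refine ⟨algebraMap _ _ p, ⟨⟨p, rfl⟩, fun m => ?_⟩, ?_⟩
    · rw [eq_map_one_mul_of_map_mul hright, hp, Algebra.commutes]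
    · rintro _ ⟨⟨q, rfl⟩, hq⟩
      refine congrArg _ (OddPoly.X_sub_X_mul_algebraMap_injective ?_)
      calc (X k 0 - X k 1) * algebraMap _ _ q
        _ = ξ 1 := by rw [hq 1, mul_one, Algebra.commutes]
        _ = (X k 0 - X k 1) * algebraMap _ _ p := hp
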